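/- Let f : M⁴ → A be a G-invariant A-multilinear map, and write m_i′ := m_i − m_{i+1}. Then the birack 3-cocycle Φ_f := f ∘ ψ₃ ∘ γ₃ : C^{BR}_3(X;ℤ)_X → A of the G-Alexander biquandle X with X-set X satisfies Φ_f((m₀,g₀),(m₁,g₁),(m₂,g₂),(m₃,g₃)) = f(m₀′ − m₀′·(φ(g₁)⁻¹g₁), m₁′, m₂′, m₃ − m₃·(φ(g₃)g₃⁻¹)) − f((m₀′ − m₀′·(φ(g₁)⁻¹g₁))g₂, m₁′g₂, m₂′φ(g₂), (m₃ − m₃·(φ(g₃)g₃⁻¹))φ(g₂)) for all m₀,…,m₃ ∈ M and g₀,…,g₃ ∈ G. -/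

import Mathlib

open FreeAbelianGroup
open scoped TensorProduct

namespace GAlex

variable {G M A : Type*} [Group G] [AddCommGroup M] [DistribMulAction Gᵐᵒᵖ M] [AddCommGroup A]

/-- The right action `m · g` of a group element `g : G` on `m : M`
(coming from the right `ℤ[G]`-module structure on `M`). -/
def ract (m : M) (g : G) : M := MulOpposite.op g • m

variable (φ : G →* G)

/-- The operation `(m,g) ⊳ (n,h) = (mh + n(φ(h) − h), h⁻¹gh)` of the `G`-Alexander biquandle. -/
def under (x y : M × G) : M × G :=
  (ract x.1 y.2 + ract y.1 (φ y.2) - ract y.1 y.2, y.2⁻¹ * x.2 * y.2)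

/-- The operation `(m,g) ⊚ (n,h) = (mφ(h), g)` of the `G`-Alexander biquandle. -/
def overOp (x y : M × G) : M × G := (ract x.1 (φ y.2), x.2)

/-- The face `g_{⟨p⟩}` (delete the `p`-th entry). -/
def dGdel (n : ℕ) (p : Fin (n + 1)) (g : Fin (n + 1) → G) : Fin n → G :=
  fun j => g (p.succAbove j)

/-- The face `g_{⟨⊲p⟩}` (conjugate the first entries by `g p` and delete the `p`-th entry). -/
def dGconj (n : ℕ) (p : Fin (n + 1)) (g : Fin (n + 1) → G) : Fin n → G :=
  fun j => if (j : ℕ) < (p : ℕ) then (g p)⁻¹ * g j.castSucc * g p else g j.succ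

/-- The face `m_{⟨p⟩}` (merge the two entries adjacent to position `p`;
for `p = 0` drop the first entry). -/
def dMmer (n : ℕ) (p : Fin (n + 1)) (m : Fin (n + 1) → M) : Fin n → M :=
  fun j =>
    if (j : ℕ) + 1 < (p : ℕ) then m j.castSucc
    else if (j : ℕ) + 1 = (p : ℕ) then m j.castSucc + m j.succ
    else m j.succ

/-- The face `m_{⟨⊲p⟩}`. -/
def dMconj (n : ℕ) (p : Fin (n + 1)) (g : Fin (n + 1) → G) (m : Fin (n + 1) → M) : Fin n → M :=
  fun j =>
    if (j : ℕ) + 1 < (p : ℕ) then ract (m j.castSucc) (g p)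
    else if (j : ℕ) + 1 = (p : ℕ) then ract (m j.castSucc) (g p) + ract (m j.succ) (φ (g p))
    else ract (m j.succ) (φ (g p))

/-- The boundary map `∂^{BR_U}_{n+1} : C^{BR_U}_{n+1}(X;ℤ) → C^{BR_U}_n(X;ℤ)`
(the boundary `∂^{BR_U}_k` is `0` for `k ≤ 1`, which agrees with this formula at `n = 0`). -/
def dBRU (n : ℕ) :
    FreeAbelianGroup ((Fin (n + 1) → G) × (Fin (n + 1) → M)) →+
      FreeAbelianGroup ((Fin n → G) × (Fin n → M)) :=
  FreeAbelianGroup.lift fun x =>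
    ∑ p : Fin (n + 1),
      (-1 : ℤ) ^ (p : ℕ) •
        (FreeAbelianGroup.of (dGdel n p x.1, dMmer n p x.2) -
          FreeAbelianGroup.of (dGconj n p x.1, dMconj φ n p x.1 x.2))

/-- The birack boundary map `∂^{BR}_{n+1} : C^{BR}_{n+1}(X;ℤ) → C^{BR}_n(X;ℤ)`
for the `G`-Alexander biquandle `X = M × G` (with trivial `X`-set). -/
def dBR (n : ℕ) :
    FreeAbelianGroup (Fin (n + 1) → M × G) →+ FreeAbelianGroup (Fin n → M × G) :=
  FreeAbelianGroup.lift fun x =>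
    ∑ p : Fin (n + 1),
      (-1 : ℤ) ^ (p : ℕ) •
        (FreeAbelianGroup.of (fun j => x (p.succAbove j)) -
          FreeAbelianGroup.of (fun j : Fin n =>
            if (j : ℕ) < (p : ℕ) then under φ (x j.castSucc) (x p)
            else overOp φ (x j.succ) (x p)))

/-- `γ_n((m₁,g₁),…,(m_n,g_n)) = (g₁,…,g_n; m₁−m₂, …, m_{n−1}−m_n, m_n)`. -/
def gammaMap (n : ℕ) :
    FreeAbelianGroup (Fin n → M × G) →+ FreeAbelianGroup ((Fin n → G) × (Fin n → M)) :=
  FreeAbelianGroup.lift fun x =>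
    FreeAbelianGroup.of
      (fun j => (x j).2,
       fun j => (x j).1 - if h : (j : ℕ) + 1 < n then (x ⟨(j : ℕ) + 1, h⟩).1 else 0)

/-- `r_n(g₁,…,g_n; m₁,…,m_n) = ((m₁+⋯+m_n, g₁), (m₂+⋯+m_n, g₂), …, (m_n, g_n))`. -/
def rMap (n : ℕ) :
    FreeAbelianGroup ((Fin n → G) × (Fin n → M)) →+ FreeAbelianGroup (Fin n → M × G) :=
  FreeAbelianGroup.lift fun p =>
    FreeAbelianGroup.of fun j => ((∑ i ∈ Finset.Ici j, p.2 i), p.1 j)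

/-- The boundary map `∂^{BR_U}_{d+1}` of `C^{BR_U}_*(X;ℤ)_X` (the version with `X`-set `X`,
whose degree-`d` chain group is free on `(1+d)`-tuples); it is `0` in degrees `≤ 1`. -/
def dBRUX : (d : ℕ) →
    FreeAbelianGroup ((Fin (d + 2) → G) × (Fin (d + 2) → M)) →+
      FreeAbelianGroup ((Fin (d + 1) → G) × (Fin (d + 1) → M))
  | 0 => 0
  | d + 1 =>
    FreeAbelianGroup.lift fun x =>
      ∑ i : Fin (d + 2),
        (-1 : ℤ) ^ (i : ℕ) •
          (FreeAbelianGroup.of (dGdel (d + 2) i.succ x.1, dMmer (d + 2) i.succ x.2) -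
            FreeAbelianGroup.of (dGconj (d + 2) i.succ x.1, dMconj φ (d + 2) i.succ x.1 x.2))

/-- The boundary map `∂^{BR}_{d+1}` of `C^{BR}_*(X;ℤ)_X` (the version with `X`-set `X`);
it is `0` in degrees `≤ 1`. -/
def dBRX : (d : ℕ) →
    FreeAbelianGroup (Fin (d + 2) → M × G) →+ FreeAbelianGroup (Fin (d + 1) → M × G)
  | 0 => 0
  | d + 1 =>
    FreeAbelianGroup.lift fun x =>
      ∑ i : Fin (d + 2),
        (-1 : ℤ) ^ (i : ℕ) •
          (FreeAbelianGroup.of (fun j => x (i.succ.succAbove j)) -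
            FreeAbelianGroup.of (fun j : Fin (d + 2) =>
              if (j : ℕ) < (i : ℕ) + 1 then under φ (x j.castSucc) (x i.succ)
              else overOp φ (x j.succ) (x i.succ)))


/-- The subgroup of `G`-coinvariants relations in `C^{gp}_n(M;ℤ)`:
generated by all `(m₁g,…,m_ng) − (m₁,…,m_n)`. -/
def coinvSub (n : ℕ) : AddSubgroup (FreeAbelianGroup (Fin n → M)) :=
  AddSubgroup.closure
    {z | ∃ (m : Fin n → M) (g : G),
        z = FreeAbelianGroup.of (fun i => ract (m i) g) - FreeAbelianGroup.of m}

/-- The coinvariant group chain group `C^{gp}_n(M;ℤ)_G`. -/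
abbrev CgpG (n : ℕ) : Type _ :=
  FreeAbelianGroup (Fin n → M) ⧸ coinvSub (G := G) (M := M) n

/-- The group-homology boundary map `∂^{gp}_{n+1} : C^{gp}_{n+1}(M;ℤ) → C^{gp}_n(M;ℤ)`
(it is `0` in degrees `≤ 1`, which agrees with this formula at `n = 0`). -/
def dgp (n : ℕ) :
    FreeAbelianGroup (Fin (n + 1) → M) →+ FreeAbelianGroup (Fin n → M) :=
  FreeAbelianGroup.lift fun m =>
    (∑ p : Fin (n + 1), (-1 : ℤ) ^ (p : ℕ) • FreeAbelianGroup.of (dMmer n p m)) +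
      (-1 : ℤ) ^ (n + 1) • FreeAbelianGroup.of fun j : Fin n => m j.castSucc

/-- `|k| = k₁ + ⋯ + k_n`. -/
def wt {n : ℕ} (k : Fin n → Bool) : ℕ := ∑ i, if k i then 1 else 0

/-- `g_{k,i} = φ(g₀^{k₀} ⋯ g_i^{k_i}) · g_{i+1}^{k_{i+1}} ⋯ g_{n-1}^{k_{n-1}}`
(indices written `0`-based; the products are ordered). -/
def gki {n : ℕ} (g : Fin n → G) (k : Fin n → Bool) (i : Fin n) : G :=
  φ ((((List.finRange n).filter fun j => decide (j ≤ i)).map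
        fun j => if k j then g j else 1).prod) *
    (((List.finRange n).filter fun j => decide (i < j)).map
        fun j => if k j then g j else 1).prod

/-- The value of `ψ` on a generator:
`Σ_{k, k₀ = 0} (−1)^{|k|} (m₀ g_{k,0}, …, m_n g_{k,n})`, as an element of the free
abelian group (before passing to coinvariants). -/
def psiVal (n : ℕ) (x : (Fin (n + 1) → G) × (Fin (n + 1) → M)) :
    FreeAbelianGroup (Fin (n + 1) → M) :=
  ∑ k ∈ Finset.univ.filter fun k : Fin (n + 1) → Bool => k 0 = false,
    (-1 : ℤ) ^ wt k • FreeAbelianGroup.of fun i => ract (x.2 i) (gki φ x.1 k i)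

/-- `ψ` as a homomorphism into the free abelian group (before coinvariants). -/
def psiFree (n : ℕ) :
    FreeAbelianGroup ((Fin (n + 1) → G) × (Fin (n + 1) → M)) →+
      FreeAbelianGroup (Fin (n + 1) → M) :=
  FreeAbelianGroup.lift (psiVal φ n)

/-- The homomorphism `ψ : C^{BR_U} → C^{gp}(M;ℤ)_G`. -/
def psiG (n : ℕ) :
    FreeAbelianGroup ((Fin (n + 1) → G) × (Fin (n + 1) → M)) →+
      CgpG (G := G) (M := M) (n + 1) :=
  (QuotientAddGroup.mk' (coinvSub (G := G) (M := M) (n + 1))).comp (psiFree φ n)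

/-- The homomorphism `ψ_{•,λ}`, sending a generator `x` to `ψ(x) ⊗ λ(x₁)` where `x₁` is the
first `G`-entry of `x`. -/
noncomputable def psiLam (lam : G → A) (n : ℕ) :
    FreeAbelianGroup ((Fin (n + 1) → G) × (Fin (n + 1) → M)) →+
      TensorProduct ℤ (CgpG (G := G) (M := M) (n + 1)) A :=
  FreeAbelianGroup.lift fun x =>
    (QuotientAddGroup.mk' (coinvSub (G := G) (M := M) (n + 1)) (psiVal φ n x)) ⊗ₜ[ℤ]
      lam (x.1 0)

/-- `D^{gp}_n(M;ℤ)_G`: the image in the coinvariants of the subgroup generated by tuples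
with a vanishing entry in a position `1 ≤ i ≤ n−1`. -/
def DgpGsub (n : ℕ) : AddSubgroup (CgpG (G := G) (M := M) n) :=
  (AddSubgroup.closure
      {z : FreeAbelianGroup (Fin n → M) |
        ∃ (m : Fin n → M) (i : Fin n),
          (i : ℕ) + 1 < n ∧ m i = 0 ∧ z = FreeAbelianGroup.of m}).map
    (QuotientAddGroup.mk' (coinvSub (G := G) (M := M) n))

theorem ract_ract' (m : M) (g h : G) : ract (ract m g) h = ract m (g * h) := by
  simp [ract, smul_smul]

theorem ract_sub' (m n : M) (g : G) : ract (m - n) g = ract m g - ract n g := by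
  simp [ract, smul_sub]

theorem ract_one' (m : M) : ract m (1 : G) = m := by
  simp [ract]

theorem filter_eq' : (Finset.univ.filter fun k : Fin 4 → Bool => k 0 = false) =
    {![false, false, false, false], ![false, false, false, true],
     ![false, false, true, false], ![false, false, true, true],
     ![false, true, false, false], ![false, true, false, true],
     ![false, true, true, false], ![false, true, true, true]} := by
  decide

theorem key' (hφ : ∀ g : G, φ g ∈ Subgroup.center G)
    (f : M → M → M → M → A)
    (hfG : ∀ (m n p q : M) (g : G),
      f (ract m g) (ract n g) (ract p g) (ract q g) = f m n p q)
    (a b c d : M) (x y z : G) :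
    f (ract a (x * (y * z))) (ract b (φ x * (y * z))) (ract c (φ x * φ y * z))
      (ract d (φ x * (φ y * φ z))) =
    f (ract a ((φ x)⁻¹ * x * y)) (ract b y) (ract c (φ y)) (ract d (φ z * z⁻¹ * φ y)) := by
  have hc : ∀ g h : G, h * φ g = φ g * h := fun g h => Subgroup.mem_center_iff.1 (hφ g) h
  rw [← hfG (ract a ((φ x)⁻¹ * x * y)) (ract b y) (ract c (φ y)) _ (φ x * z)]
  simp only [ract_ract']
  have h1 : (φ x)⁻¹ * x * y * (φ x * z) = x * (y * z) := by
    rw [← mul_assoc, hc x ((φ x)⁻¹ * x * y)]; group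
  have h2 : y * (φ x * z) = φ x * (y * z) := by
    rw [← mul_assoc, hc x y, mul_assoc]
  have h3 : φ y * (φ x * z) = φ x * φ y * z := by
    rw [← mul_assoc, hc x (φ y)]
  have h4 : φ z * z⁻¹ * φ y * (φ x * z) = φ x * (φ y * φ z) := by
    rw [← mul_assoc, hc x, hc y, mul_assoc, mul_assoc, mul_assoc, inv_mul_cancel, mul_one]
  rw [h1, h2, h3, h4]

/-- For a `G`-invariant `A`-multilinear map `f : M⁴ → A`, the birack
`3`-cocycle `Φ_f = f ∘ ψ₃ ∘ γ₃ : C^{BR}_3(X;ℤ)_X → A` (with `X`-set `X`) satisfies, with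
`mᵢ' = mᵢ − mᵢ₊₁`:
`Φ_f((m₀,g₀),…,(m₃,g₃)) =
  f(m₀' − m₀'·(φ(g₁)⁻¹g₁), m₁', m₂', m₃ − m₃·(φ(g₃)g₃⁻¹))
  − f((m₀' − m₀'·(φ(g₁)⁻¹g₁))g₂, m₁'g₂, m₂'φ(g₂), (m₃ − m₃·(φ(g₃)g₃⁻¹))φ(g₂))`. -/
theorem birackX_three_cocycle_formula (hφ : ∀ g : G, φ g ∈ Subgroup.center G)
    (f : M → M → M → M → A)
    (hf₁ : ∀ m m' n p q : M, f (m + m') n p q = f m n p q + f m' n p q)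
    (hf₂ : ∀ m n n' p q : M, f m (n + n') p q = f m n p q + f m n' p q)
    (hf₃ : ∀ m n p p' q : M, f m n (p + p') q = f m n p q + f m n p' q)
    (hf₄ : ∀ m n p q q' : M, f m n p (q + q') = f m n p q + f m n p q')
    (hfG : ∀ (m n p q : M) (g : G),
      f (ract m g) (ract n g) (ract p g) (ract q g) = f m n p q) :
    ∀ (m₀ m₁ m₂ m₃ : M) (g₀ g₁ g₂ g₃ : G),
      FreeAbelianGroup.lift (fun v : Fin 4 → M => f (v 0) (v 1) (v 2) (v 3))
          (psiFree φ 3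
            (gammaMap 4
              (FreeAbelianGroup.of ![(m₀, g₀), (m₁, g₁), (m₂, g₂), (m₃, g₃)]))) =
        f ((m₀ - m₁) - ract (m₀ - m₁) ((φ g₁)⁻¹ * g₁)) (m₁ - m₂) (m₂ - m₃)
            (m₃ - ract m₃ (φ g₃ * g₃⁻¹)) -
          f (ract ((m₀ - m₁) - ract (m₀ - m₁) ((φ g₁)⁻¹ * g₁)) g₂) (ract (m₁ - m₂) g₂)
            (ract (m₂ - m₃) (φ g₂)) (ract (m₃ - ract m₃ (φ g₃ * g₃⁻¹)) (φ g₂)) := by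
  intro m₀ m₁ m₂ m₃ g₀ g₁ g₂ g₃
  have s₁ : ∀ m m' n p q : M, f (m - m') n p q = f m n p q - f m' n p q := by
    intro m m' n p q
    rw [eq_sub_iff_add_eq, ← hf₁, sub_add_cancel]
  have s₄ : ∀ m n p q q' : M, f m n p (q - q') = f m n p q - f m n p q' := by
    intro m n p q q'
    rw [eq_sub_iff_add_eq, ← hf₄, sub_add_cancel]
  have e : FreeAbelianGroup.lift (fun v : Fin 4 → M => f (v 0) (v 1) (v 2) (v 3))
          (psiFree φ 3
            (gammaMap 4
              (FreeAbelianGroup.of ![(m₀, g₀), (m₁, g₁), (m₂, g₂), (m₃, g₃)]))) =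
      ∑ k ∈ Finset.univ.filter fun k : Fin 4 → Bool => k 0 = false,
        (-1 : ℤ) ^ wt k •
          f (ract (m₀ - m₁) (gki φ ![g₀, g₁, g₂, g₃] k 0))
            (ract (m₁ - m₂) (gki φ ![g₀, g₁, g₂, g₃] k 1))
            (ract (m₂ - m₃) (gki φ ![g₀, g₁, g₂, g₃] k 2))
            (ract m₃ (gki φ ![g₀, g₁, g₂, g₃] k 3)) := by
    simp only [gammaMap, psiFree, FreeAbelianGroup.lift_apply_of, psiVal, map_sum, map_zsmul]
    refine Finset.sum_congr rfl fun k _ => ?_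
    have hg : (fun j => ((![(m₀, g₀), (m₁, g₁), (m₂, g₂), (m₃, g₃)] : Fin 4 → M × G) j).2)
        = ![g₀, g₁, g₂, g₃] := by
      funext j; fin_cases j <;> rfl
    rw [hg]
    simp
  have c0 : ∀ (k : Fin 4 → Bool), k 0 = false →
      (f (ract (m₀ - m₁) (gki φ ![g₀, g₁, g₂, g₃] k 0))
            (ract (m₁ - m₂) (gki φ ![g₀, g₁, g₂, g₃] k 1))
            (ract (m₂ - m₃) (gki φ ![g₀, g₁, g₂, g₃] k 2))
            (ract m₃ (gki φ ![g₀, g₁, g₂, g₃] k 3))) =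
      (fun x y z : G => f (ract (m₀ - m₁) ((φ x)⁻¹ * x * y)) (ract (m₁ - m₂) y)
        (ract (m₂ - m₃) (φ y)) (ract m₃ (φ z * z⁻¹ * φ y)))
        (if k 1 then g₁ else 1) (if k 2 then g₂ else 1) (if k 3 then g₃ else 1) := by
    intro k hk
    beta_reduce
    rw [← key' φ hφ f hfG]
    have hl : List.finRange 4 = [0, 1, 2, 3] := by decide
    cases h1 : k 1 <;> cases h2 : k 2 <;> cases h3 : k 3 <;>
      simp [gki, hl, hk, h1, h2, h3, mul_assoc]
  rw [e, Finset.sum_congr rfl fun k hk => by rw [c0 k (Finset.mem_filter.1 hk).2], filter_eq']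
  simp only [s₁, s₄, ract_sub', ract_ract']
  repeat rw [Finset.sum_insert (by decide)]
  rw [Finset.sum_singleton]
  simp only [wt, Fin.sum_univ_four]
  simp [ract_one']
  abel

end GAlex
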